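/- arXiv:2410.00762 — 7 statements merged into one kernel-verified Lean document; each statement's English description precedes it below -/
import Mathlib

section
/- Let Γ be a finite group acting linearly on a finite-dimensional real vector space V, and let S ⊆ V be a finite linearly independent subset that is Γ-stable (γ·S = S for all γ ∈ Γ) and on which Γ acts transitively. Then the set of Γ-fixed points of the cone generated by S is exactly the ray {t · Σ_{e∈S} e : t ∈ ℝ, t ≥ 0}. -/
/-! Applying `γ` to `x = ∑ c e • e` permutes the coefficients, `γ • x = ∑ c (γ⁻¹ • e) • e`, so by
linear independence `x` is fixed by `Γ` iff `c` is constant on the `Γ`-orbits in `S`. As `Γ` acts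
transitively on `S`, this means that `c` is constant on `S`, i.e. `x` is a multiple of `∑ e`. -/

/-- The cone generated by a finite subset `S` of a real vector space: the set of all
nonnegative real linear combinations of elements of `S`. -/
def coneGen {V : Type*} [AddCommGroup V] [Module ℝ V] (S : Finset V) : Set V :=
  {x | ∃ c : V → ℝ, (∀ v, 0 ≤ c v) ∧ x = ∑ e ∈ S, c e • e}

lemma sum_smul_reindex {Γ V M : Type*} [Group Γ] [MulAction Γ V] [AddCommMonoid M]
    (S : Finset V) (hstab : ∀ (γ : Γ), ∀ v ∈ S, γ • v ∈ S) (γ : Γ) (f : V → M) :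
    ∑ e ∈ S, f (γ • e) = ∑ e ∈ S, f e :=
  Finset.sum_bij' (fun e _ => γ • e) (fun e _ => γ⁻¹ • e) (hstab γ) (hstab γ⁻¹)
    (by simp) (by simp) (by simp)

/-- If a finite group `Γ` acts linearly on a finite-dimensional real vector space `V`,
and `S` is a finite linearly independent `Γ`-stable subset on which `Γ` acts
transitively, then the `Γ`-fixed points of the cone generated by `S` form exactly the
ray spanned by the sum of the elements of `S`. -/
theorem stmt0 {Γ V : Type*} [Group Γ] [Finite Γ] [AddCommGroup V] [Module ℝ V]
    [FiniteDimensional ℝ V] [DistribMulAction Γ V] [SMulCommClass Γ ℝ V]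
    (S : Finset V)
    (hind : LinearIndependent ℝ (fun x : S => (x : V)))
    (hstab : ∀ (γ : Γ), ∀ v ∈ S, γ • v ∈ S)
    (htrans : ∀ v ∈ S, ∀ w ∈ S, ∃ γ : Γ, γ • v = w) :
    {x : V | x ∈ coneGen S ∧ ∀ γ : Γ, γ • x = x}
      = {x : V | ∃ t : ℝ, 0 ≤ t ∧ x = t • ∑ e ∈ S, e} := by
  ext x
  constructor
  · rintro ⟨⟨c, hc, rfl⟩, hfix⟩
    have hconst : ∀ v ∈ S, ∀ w ∈ S, c w = c v := by
      intro v hv w hw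
      obtain ⟨γ, rfl⟩ := htrans v hv w hw
      have h1 : ∑ e ∈ S, c (γ⁻¹ • e) • e = ∑ e ∈ S, c e • e := by
        rw [← hfix γ, Finset.smul_sum, ← sum_smul_reindex S hstab γ]
        exact Finset.sum_congr rfl fun e _ => by rw [inv_smul_smul, smul_comm γ]
      have h2 : ∑ e ∈ S, (c e - c (γ⁻¹ • e)) • id e = 0 := by
        simp only [id, sub_smul, Finset.sum_sub_distrib, h1, sub_self]
      have h3 := (linearIndepOn_finset_iff (v := id)).mp (show LinearIndepOn ℝ id (S : Set V) from hind) _ h2 _ hw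
      rw [inv_smul_smul] at h3
      exact sub_eq_zero.mp h3
    rcases S.eq_empty_or_nonempty with rfl | ⟨v, hv⟩
    · exact ⟨0, le_rfl, by simp⟩
    · refine ⟨c v, hc v, ?_⟩
      rw [Finset.smul_sum]
      exact Finset.sum_congr rfl fun e he => by rw [hconst v hv e he]
  · rintro ⟨t, ht, rfl⟩
    refine ⟨⟨fun _ => t, fun _ => ht, Finset.smul_sum⟩, fun γ => ?_⟩
    rw [smul_comm, Finset.smul_sum, sum_smul_reindex S hstab γ (fun e => e)]
end

section
/- Let Γ be a finite group acting linearly on a finite-dimensional real vector space V, and let S ⊆ V be a finite linearly independent Γ-stable subset. Then the set of Γ-fixed points of the cone generated by S equals the cone generated by the orbit sums {Σ_{e∈O} e : O an orbit of Γ acting on S}. -/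
theorem mem_coneGen_of_mem {V : Type*} [AddCommGroup V] [Module ℝ V] {S : Finset V} {e : V}
    (he : e ∈ S) : e ∈ coneGen S := by
  classical
  refine ⟨fun v => if v = e then 1 else 0, fun v => by dsimp only; split_ifs <;> norm_num, ?_⟩
  simp [he]

theorem sum_smul_mem_coneGen {V ι : Type*} [AddCommGroup V] [Module ℝ V] {S : Finset V}
    (t : Finset ι) (a : ι → ℝ) (f : ι → V) (ha : ∀ i ∈ t, 0 ≤ a i)
    (hf : ∀ i ∈ t, f i ∈ coneGen S) : ∑ i ∈ t, a i • f i ∈ coneGen S := by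
  classical
  induction t using Finset.induction_on with
  | empty => exact ⟨fun _ => 0, fun _ => le_rfl, by simp⟩
  | insert i t hi ih =>
    obtain ⟨c, hc, hc'⟩ := ih (fun j hj => ha j (Finset.mem_insert_of_mem hj))
      (fun j hj => hf j (Finset.mem_insert_of_mem hj))
    obtain ⟨d, hd, hd'⟩ := hf i (Finset.mem_insert_self i t)
    have hai := ha i (Finset.mem_insert_self i t)
    refine ⟨fun v => a i * d v + c v, fun v => add_nonneg (mul_nonneg hai (hd v)) (hc v), ?_⟩
    rw [Finset.sum_insert hi, hc', hd', Finset.smul_sum, ← Finset.sum_add_distrib]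
    simp only [add_smul, mul_smul]

open scoped Classical in
/-- The part of the `Γ`-orbit of `v` lying in `S`; when `S` is `Γ`-stable and `v ∈ S`, this is the
whole orbit. -/
noncomputable def orbitFinset (Γ : Type*) {V : Type*} [Group Γ] [AddCommGroup V]
    [DistribMulAction Γ V] (S : Finset V) (v : V) : Finset V :=
  S.filter (fun w => ∃ γ : Γ, γ • v = w)

theorem mem_orbitFinset {Γ V : Type*} [Group Γ] [AddCommGroup V] [DistribMulAction Γ V]
    {S : Finset V} {v w : V} : w ∈ orbitFinset Γ S v ↔ w ∈ S ∧ ∃ γ : Γ, γ • v = w := by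
  simp [orbitFinset]

/-- The sum of the elements of `orbitFinset Γ S v`. -/
noncomputable def orbitSum (Γ : Type*) {V : Type*} [Group Γ] [AddCommGroup V]
    [DistribMulAction Γ V] (S : Finset V) (v : V) : V :=
  ∑ w ∈ orbitFinset Γ S v, w

theorem orbitSum_mem_coneGen {Γ V : Type*} [Group Γ] [AddCommGroup V] [Module ℝ V]
    [DistribMulAction Γ V] (S : Finset V) (v : V) : orbitSum Γ S v ∈ coneGen S := by
  have h := sum_smul_mem_coneGen (S := S) (orbitFinset Γ S v)
    (fun _ => 1) (fun w => w) (fun _ _ => zero_le_one)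
    (fun w hw => mem_coneGen_of_mem (mem_orbitFinset.1 hw).1)
  simpa only [one_smul, orbitSum] using h

theorem smul_orbitSum {Γ V : Type*} [Group Γ] [AddCommGroup V] [DistribMulAction Γ V]
    {S : Finset V} (hstab : ∀ (γ : Γ), ∀ v ∈ S, γ • v ∈ S) (γ : Γ) (v : V) :
    γ • orbitSum Γ S v = orbitSum Γ S v := by
  classical
  have hmem : ∀ (g : Γ) (w : V), (w ∈ S ∧ ∃ δ : Γ, δ • v = w) →
      (g • w ∈ S ∧ ∃ δ : Γ, δ • v = g • w) := by
    rintro g w ⟨hw, δ, rfl⟩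
    exact ⟨hstab g _ hw, g * δ, mul_smul g δ v⟩
  unfold orbitSum
  rw [Finset.smul_sum]
  refine Finset.sum_bij' (fun w _ => γ • w) (fun w _ => γ⁻¹ • w) ?_ ?_ ?_ ?_ ?_
  · intro w hw
    exact mem_orbitFinset.2 (hmem γ w (mem_orbitFinset.1 hw))
  · intro w hw
    exact mem_orbitFinset.2 (hmem γ⁻¹ w (mem_orbitFinset.1 hw))
  · intro w _
    exact inv_smul_smul γ w
  · intro w _
    exact smul_inv_smul γ w
  · intro w _
    rfl

open scoped Classical in
/-- The group elements carrying `v` to a given point `w` of its orbit form a coset of the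
stabilizer of `v`, so every point of the orbit occurs equally often in `∑ γ, γ • v`. -/
theorem sum_smul_eq_card_smul_orbitSum {Γ V : Type*} [Group Γ] [Fintype Γ] [AddCommGroup V]
    [DistribMulAction Γ V] {S : Finset V} (hstab : ∀ (γ : Γ), ∀ v ∈ S, γ • v ∈ S)
    {v : V} (hv : v ∈ S) :
    ∑ γ : Γ, γ • v = (Finset.univ.filter fun γ : Γ => γ • v = v).card • orbitSum Γ S v := by
  unfold orbitSum
  rw [← Finset.sum_fiberwise_of_maps_to (s := Finset.univ)
    (t := orbitFinset Γ S v) (g := fun γ : Γ => γ • v)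
    (fun γ _ => mem_orbitFinset.2 ⟨hstab γ v hv, γ, rfl⟩), Finset.smul_sum]
  refine Finset.sum_congr rfl fun w hw => ?_
  obtain ⟨-, δ, rfl⟩ := mem_orbitFinset.1 hw
  rw [Finset.sum_congr rfl fun γ hγ => (Finset.mem_filter.1 hγ).2, Finset.sum_const]
  congr 1
  refine Finset.card_bij' (fun γ _ => δ⁻¹ * γ) (fun γ _ => δ * γ) ?_ ?_ ?_ ?_
  · intro γ hγ
    simpa [mul_smul, inv_smul_eq_iff] using hγ
  · intro γ hγ
    simpa [mul_smul] using hγ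
  · intro γ _
    exact mul_inv_cancel_left δ γ
  · intro γ _
    exact inv_mul_cancel_left δ γ

open scoped Classical in
/-- If a finite group `Γ` acts linearly on a finite-dimensional real vector space `V`,
and `S` is a finite linearly independent `Γ`-stable subset, then the `Γ`-fixed points of
the cone generated by `S` equal the cone generated by the orbit sums
`∑_{w ∈ orbit of v} w` for `v ∈ S`. -/
theorem stmt1 {Γ V : Type*} [Group Γ] [Finite Γ] [AddCommGroup V] [Module ℝ V]
    [FiniteDimensional ℝ V] [DistribMulAction Γ V] [SMulCommClass Γ ℝ V]
    (S : Finset V)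
    (hind : LinearIndependent ℝ (fun x : S => (x : V)))
    (hstab : ∀ (γ : Γ), ∀ v ∈ S, γ • v ∈ S) :
    {x : V | x ∈ coneGen S ∧ ∀ γ : Γ, γ • x = x}
      = coneGen (S.image fun v => ∑ w ∈ S.filter (fun w => ∃ γ : Γ, γ • v = w), w) := by
  have := Fintype.ofFinite Γ
  change _ = coneGen (S.image (orbitSum Γ S))
  apply Set.Subset.antisymm
  · rintro x ⟨⟨c, hc, hx⟩, hfix⟩
    set k : V → ℕ := fun v => (Finset.univ.filter fun γ : Γ => γ • v = v).card with hk
    have hcard : (Fintype.card Γ : ℝ) ≠ 0 := Nat.cast_ne_zero.2 Fintype.card_ne_zero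
    have havg : (Fintype.card Γ : ℝ) • x = ∑ e ∈ S, (c e * k e) • orbitSum Γ S e := by
      calc (Fintype.card Γ : ℝ) • x = ∑ γ : Γ, γ • x := by
            simp [hfix, Nat.cast_smul_eq_nsmul]
        _ = ∑ e ∈ S, c e • ∑ γ : Γ, γ • e := by
            simp_rw [hx, Finset.smul_sum, smul_comm _ (c _)]
            exact Finset.sum_comm
        _ = _ := by
            refine Finset.sum_congr rfl fun e he => ?_
            rw [sum_smul_eq_card_smul_orbitSum hstab he, mul_smul, Nat.cast_smul_eq_nsmul]
    have hx' : x = ∑ e ∈ S, ((Fintype.card Γ : ℝ)⁻¹ * (c e * k e)) • orbitSum Γ S e := by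
      simp_rw [mul_smul _ (c _ * _), ← Finset.smul_sum]
      rw [← havg, inv_smul_smul₀ hcard]
    rw [hx']
    refine sum_smul_mem_coneGen S _ _ (fun e _ => ?_)
      (fun e he => mem_coneGen_of_mem (Finset.mem_image_of_mem _ he))
    have := hc e
    positivity
  · rintro x ⟨c, hc, rfl⟩
    refine ⟨sum_smul_mem_coneGen _ _ _ (fun u _ => hc u) fun u hu => ?_, fun γ => ?_⟩
    · obtain ⟨v, -, rfl⟩ := Finset.mem_image.1 hu
      exact orbitSum_mem_coneGen S v
    · rw [Finset.smul_sum]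
      refine Finset.sum_congr rfl fun u hu => ?_
      obtain ⟨v, -, rfl⟩ := Finset.mem_image.1 hu
      rw [smul_comm, smul_orbitSum hstab]
end

section
/- Let Γ be a finite group acting linearly on a finite-dimensional real vector space V, let S ⊆ V be a finite linearly independent Γ-stable subset, and let S' ⊆ S be a Γ-stable subset with S' ≠ S. Then for any e ∈ S ∖ S', the element Σ_{γ∈Γ} γ·e lies in the cone generated by S, is Γ-fixed, and does not lie in the cone generated by S'. In particular, the Γ-fixed part of the cone generated by S' is a proper subset of the Γ-fixed part of the cone generated by S. -/
open Classical in
/-- The orbit sum of `e`, grouped by the values `γ • e`: the coefficient of `v` is the number of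
group elements carrying `e` to `v`. -/
theorem orbitSum_eq {Γ V : Type*} [Group Γ] [Fintype Γ] [AddCommGroup V] [Module ℝ V]
    [DistribMulAction Γ V] (S : Finset V) (hstab : ∀ (γ : Γ), ∀ v ∈ S, γ • v ∈ S)
    (e : V) (he : e ∈ S) :
    ∑ γ : Γ, γ • e = ∑ v ∈ S, ((Finset.univ.filter fun γ : Γ => γ • e = v).card : ℝ) • v := by
  rw [← Finset.sum_fiberwise_of_maps_to (s := Finset.univ) (t := S) (g := fun γ : Γ => γ • e)
    (fun γ _ => hstab γ e he)]
  refine Finset.sum_congr rfl fun v _ => ?_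
  rw [Finset.sum_congr rfl (fun γ hγ => (Finset.mem_filter.mp hγ).2), Finset.sum_const,
    Nat.cast_smul_eq_nsmul]

/-- The cone generated by a subset is contained in the cone generated by the whole set, and the
coefficients of the smaller combination may be taken to vanish off the subset. -/
theorem exists_coeff_of_mem_coneGen {V : Type*} [AddCommGroup V] [Module ℝ V] {S S' : Finset V}
    (hsub : S' ⊆ S) {x : V} (hx : x ∈ coneGen S') :
    ∃ c : V → ℝ, (∀ v, 0 ≤ c v) ∧ (∀ v, v ∉ S' → c v = 0) ∧ x = ∑ v ∈ S, c v • v := by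
  classical
  obtain ⟨c, hc, rfl⟩ := hx
  refine ⟨fun v => if v ∈ S' then c v else 0, fun v => ?_, fun v hv => if_neg hv, ?_⟩
  · dsimp only
    split_ifs
    exacts [hc v, le_rfl]
  · rw [← Finset.sum_subset hsub fun v _ hv => by simp [hv]]
    exact Finset.sum_congr rfl fun v hv => by simp [hv]

/-- By uniqueness of coefficients, a combination of a linearly independent set with nonzero
coefficient at some `e ∉ S'` is not in the cone generated by `S'`. -/
theorem sum_notMem_coneGen {V : Type*} [AddCommGroup V] [Module ℝ V] {S S' : Finset V}
    (hind : LinearIndependent ℝ (fun x : S => (x : V))) (hsub : S' ⊆ S) {e : V} (he : e ∈ S)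
    (he' : e ∉ S') (a : V → ℝ) (ha : a e ≠ 0) : ∑ v ∈ S, a v • v ∉ coneGen S' := by
  intro h
  obtain ⟨c, -, hc, hsum⟩ := exists_coeff_of_mem_coneGen hsub h
  have hzero : ∑ v : S, (a v - c v) • (v : V) = 0 := by
    rw [Finset.sum_coe_sort S fun v => (a v - c v) • v]
    simp only [sub_smul, Finset.sum_sub_distrib]
    exact sub_eq_zero.mpr hsum
  have := Fintype.linearIndependent_iff.mp hind (fun v => a v - c v) hzero ⟨e, he⟩
  rw [hc e he', sub_zero] at this
  exact ha this

/-- If `Γ` is a finite group acting linearly on a finite-dimensional real vector space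
`V`, `S` is a finite linearly independent `Γ`-stable subset, and `S' ⊆ S` is a
`Γ`-stable subset with `S' ≠ S`, then for any `e ∈ S ∖ S'` the element `∑_{γ∈Γ} γ•e`
lies in the cone generated by `S`, is `Γ`-fixed, and does not lie in the cone generated
by `S'`; in particular the `Γ`-fixed part of the cone generated by `S'` is a proper
subset of the `Γ`-fixed part of the cone generated by `S`. -/
theorem stmt2 {Γ V : Type*} [Group Γ] [Fintype Γ] [AddCommGroup V] [Module ℝ V]
    [FiniteDimensional ℝ V] [DistribMulAction Γ V] [SMulCommClass Γ ℝ V]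
    (S S' : Finset V)
    (hind : LinearIndependent ℝ (fun x : S => (x : V)))
    (hstab : ∀ (γ : Γ), ∀ v ∈ S, γ • v ∈ S)
    (hsub : S' ⊆ S)
    (hstab' : ∀ (γ : Γ), ∀ v ∈ S', γ • v ∈ S')
    (hne : S' ≠ S) :
    (∀ e ∈ S, e ∉ S' →
      (∑ γ : Γ, γ • e) ∈ coneGen S ∧
      (∀ γ : Γ, γ • (∑ γ' : Γ, γ' • e) = ∑ γ' : Γ, γ' • e) ∧
      (∑ γ : Γ, γ • e) ∉ coneGen S') ∧
    {x : V | x ∈ coneGen S' ∧ ∀ γ : Γ, γ • x = x} ⊂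
      {x : V | x ∈ coneGen S ∧ ∀ γ : Γ, γ • x = x} := by
  classical
  have main : ∀ e ∈ S, e ∉ S' →
      (∑ γ : Γ, γ • e) ∈ coneGen S ∧
      (∀ γ : Γ, γ • (∑ γ' : Γ, γ' • e) = ∑ γ' : Γ, γ' • e) ∧
      (∑ γ : Γ, γ • e) ∉ coneGen S' := by
    intro e he he'
    refine ⟨⟨_, fun v => Nat.cast_nonneg _, orbitSum_eq S hstab e he⟩, fun γ => ?_, ?_⟩
    · rw [Finset.smul_sum]
      exact Fintype.sum_equiv (Equiv.mulLeft γ) _ _ fun γ' => smul_smul γ γ' e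
    · rw [orbitSum_eq S hstab e he]
      refine sum_notMem_coneGen hind hsub he he' _ (Nat.cast_ne_zero.mpr ?_)
      exact Finset.card_ne_zero.mpr ⟨1, by simp⟩
  refine ⟨main, (Set.ssubset_iff_of_subset ?_).mpr ?_⟩
  · rintro x ⟨hx, hfix⟩
    obtain ⟨c, hc, -, hsum⟩ := exists_coeff_of_mem_coneGen hsub hx
    exact ⟨⟨c, hc, hsum⟩, hfix⟩
  · obtain ⟨e, he, he'⟩ := Finset.exists_of_ssubset (hsub.ssubset_of_ne hne)
    obtain ⟨h₁, h₂, h₃⟩ := main e he he'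
    exact ⟨_, ⟨h₁, h₂⟩, fun h => h₃ h.1⟩
end

section
/- Let r ≥ 1, let v_1, …, v_r be a basis of ℝ^r, let φ : ℝ^r → ℂ be an ℝ-linear map, and let m : ℝ^r → ℝ be a linear functional. Let C = {t_1 v_1 + ⋯ + t_r v_r : t_j ≥ 0 for all j} be the cone generated by v_1, …, v_r. Then the function y ↦ exp(φ(y)) · exp(−2πi·m(y)) is Lebesgue-integrable on C if and only if Re(φ(v_j)) < 0 for every j, in which case its integral over C equals |det(v_1, …, v_r)| · Π_{j=1}^{r} (−φ(v_j) + 2πi·m(v_j))^{-1}, where det(v_1,…,v_r) denotes the determinant of the matrix with columns v_1, …, v_r. -/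
/-!
The linear map `t ↦ ∑ j, t j • v j` carries the closed orthant `[0, ∞)^r` bijectively onto the
cone, with constant Jacobian `|det v|`, and pulls the integrand back to `∏ j, exp (a j * t j)`
where `a j = φ (v j) - 2πi m (v j)`. If all `Re (a j) = Re (φ (v j))` are negative, Fubini's theorem
reduces integrability and the value to the one-variable integral
`∫_0^∞ exp (a t) dt = (-a)⁻¹`.
Conversely, if `Re (a j) ≥ 0` for some `j`, then on the half-infinite box
`{t | 0 ≤ t j, t i ∈ [0, 1] for i ≠ j}`, which has infinite volume, the modulus of the product is
bounded below by a positive constant (`orthant_not_integrable`).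
-/

open MeasureTheory

/-- A coordinate exponent with nonnegative real part obstructs integrability on the orthant. -/
lemma orthant_not_integrable {r : ℕ} (a : Fin r → ℂ) (j : Fin r) (hj : 0 ≤ (a j).re) :
    ¬ IntegrableOn (fun t : Fin r → ℝ => ∏ i, Complex.exp (a i * t i))
      (Set.univ.pi fun _ => Set.Ici (0 : ℝ)) volume := by
  intro h
  -- the half-infinite box: unbounded in the direction `j`, the unit interval in the others
  set S : Set (Fin r → ℝ) :=
    Set.univ.pi (Function.update (fun _ => Set.Icc (0 : ℝ) 1) j (Set.Ici 0)) with hS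
  have hmem : ∀ t ∈ S, 0 ≤ t j ∧ ∀ i, i ≠ j → t i ∈ Set.Icc (0 : ℝ) 1 := by
    intro t ht
    refine ⟨by simpa using ht j trivial, fun i hi => ?_⟩
    have := ht i trivial
    rwa [Function.update_of_ne hi] at this
  have hmeas : MeasurableSet S := by
    refine MeasurableSet.univ_pi fun i => ?_
    by_cases hi : i = j
    · subst hi
      simp [measurableSet_Ici]
    · rw [Function.update_of_ne hi]
      exact measurableSet_Icc
  have hsub : S ⊆ Set.univ.pi fun _ => Set.Ici (0 : ℝ) := by
    intro t ht i _
    by_cases hi : i = j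
    · subst hi
      exact (hmem t ht).1
    · exact ((hmem t ht).2 i hi).1
  have hvol : volume S = ⊤ := by
    rw [hS, volume_pi_pi, ← Finset.mul_prod_erase _ _ (Finset.mem_univ j),
      Function.update_self, Real.volume_Ici, Finset.prod_congr rfl (g := fun _ => 1)]
    · simp
    · intro i hi
      rw [Function.update_of_ne (Finset.ne_of_mem_erase hi)]
      simp
  have hlow : ∀ t ∈ S, ∏ i, Real.exp (-|(a i).re|) ≤ ‖∏ i, Complex.exp (a i * t i)‖ := by
    intro t ht
    rw [norm_prod]
    refine Finset.prod_le_prod (fun _ _ => (Real.exp_pos _).le) fun i _ => ?_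
    rw [Complex.norm_exp, Complex.re_mul_ofReal, Real.exp_le_exp]
    by_cases hi : i = j
    · subst hi
      exact (neg_nonpos.2 (abs_nonneg _)).trans (mul_nonneg hj (hmem t ht).1)
    · obtain ⟨h0, h1⟩ := (hmem t ht).2 i hi
      nlinarith [neg_abs_le (a i).re, abs_nonneg (a i).re]
  have hpos : 0 < ∏ i, Real.exp (-|(a i).re|) := Finset.prod_pos fun _ _ => Real.exp_pos _
  have hconst : IntegrableOn (fun _ : Fin r → ℝ => ∏ i, Real.exp (-|(a i).re|)) S volume := by
    refine Integrable.mono (h.mono_set hsub) aestronglyMeasurable_const ?_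
    filter_upwards [ae_restrict_mem hmeas] with t ht
    rw [Real.norm_of_nonneg hpos.le]
    exact hlow t ht
  rw [integrableOn_const_iff] at hconst
  rcases hconst with h0 | hfin
  · exact hpos.ne' (by simpa using h0)
  · exact hfin.ne hvol

/-- Let `v 1, …, v r` be a basis of `ℝ^r`, `φ : ℝ^r → ℂ` an `ℝ`-linear map and
`m : ℝ^r → ℝ` a linear functional, and let `C` be the cone generated by the `v j`.
Then `y ↦ exp(φ y) · exp(−2πi m y)` is Lebesgue-integrable on `C` iff
`Re (φ (v j)) < 0` for every `j`, in which case its integral over `C` equals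
`|det(v 1, …, v r)| · ∏ j, (−φ (v j) + 2πi m (v j))⁻¹`. -/
theorem stmt6 (r : ℕ) (hr : 1 ≤ r) (v : Fin r → (Fin r → ℝ))
    (hv : LinearIndependent ℝ v) (hspan : Submodule.span ℝ (Set.range v) = ⊤)
    (φ : (Fin r → ℝ) →ₗ[ℝ] ℂ) (m : (Fin r → ℝ) →ₗ[ℝ] ℝ)
    (C : Set (Fin r → ℝ))
    (hC : C = {y | ∃ t : Fin r → ℝ, (∀ j, 0 ≤ t j) ∧ y = ∑ j, t j • v j}) :
    (IntegrableOn
        (fun y : Fin r → ℝ =>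
          Complex.exp (φ y) * Complex.exp (-(2 * (Real.pi : ℂ) * Complex.I) * (m y : ℂ)))
        C volume
      ↔ ∀ j, (φ (v j)).re < 0) ∧
    ((∀ j, (φ (v j)).re < 0) →
      ∫ y : Fin r → ℝ in C,
          Complex.exp (φ y) * Complex.exp (-(2 * (Real.pi : ℂ) * Complex.I) * (m y : ℂ))
        = (Complex.ofReal |Matrix.det (Matrix.of fun i j : Fin r => v j i)|) *
            ∏ j, (-φ (v j) + 2 * (Real.pi : ℂ) * Complex.I * (m (v j) : ℂ))⁻¹) := by
  set A : Matrix (Fin r) (Fin r) ℝ := Matrix.of fun i j : Fin r => v j i with hA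
  set T : (Fin r → ℝ) →L[ℝ] (Fin r → ℝ) := LinearMap.toContinuousLinearMap (Matrix.toLin' A) with hT
  set a : Fin r → ℂ := fun j => φ (v j) - 2 * (Real.pi : ℂ) * Complex.I * (m (v j) : ℂ) with ha
  have hTapp : ∀ t, T t = ∑ j, t j • v j := by
    intro t
    ext i
    simp [hT, hA, Matrix.mulVec, dotProduct, mul_comm]
  have hdet : T.det = A.det := by
    simp [hT, ContinuousLinearMap.det]
  have hdet0 : |A.det| ≠ 0 := by
    have hu : IsUnit A.transpose := Matrix.linearIndependent_rows_iff_isUnit.1 hv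
    rw [Matrix.isUnit_iff_isUnit_det, Matrix.det_transpose] at hu
    exact abs_ne_zero.2 hu.ne_zero
  have hinj : Function.Injective T := by
    intro s t hst
    rw [hTapp, hTapp] at hst
    funext j
    have := Fintype.linearIndependent_iff.1 hv (fun j => s j - t j)
      (by simp [sub_smul, Finset.sum_sub_distrib, hst]) j
    linarith
  have hCT : C = T '' (Set.univ.pi fun _ => Set.Ici (0 : ℝ)) := by
    rw [hC]
    ext y
    simp only [Set.mem_ofPred_eq, Set.mem_image, Set.mem_univ_pi, Set.mem_Ici, hTapp]
    exact exists_congr fun t => and_congr_right fun _ => eq_comm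
  have hmeas : MeasurableSet (Set.univ.pi fun _ : Fin r => Set.Ici (0 : ℝ)) :=
    MeasurableSet.univ_pi fun _ => measurableSet_Ici
  have hF : ∀ t : Fin r → ℝ, Complex.exp (φ (T t)) *
      Complex.exp (-(2 * (Real.pi : ℂ) * Complex.I) * (m (T t) : ℂ))
        = ∏ j, Complex.exp (a j * t j) := by
    intro t
    rw [← Complex.exp_add, ← Complex.exp_sum, hTapp]
    congr 1
    simp only [map_sum, map_smul, Complex.ofReal_sum, Finset.mul_sum, ← Finset.sum_add_distrib, ha]
    refine Finset.sum_congr rfl fun j _ => ?_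
    simp only [Complex.real_smul, smul_eq_mul, Complex.ofReal_mul]
    ring
  have hre : ∀ j, (a j).re = (φ (v j)).re := by
    intro j
    simp [ha]
  have hderiv : ∀ x ∈ (Set.univ.pi fun _ : Fin r => Set.Ici (0 : ℝ)),
      HasFDerivWithinAt T T (Set.univ.pi fun _ : Fin r => Set.Ici (0 : ℝ)) x :=
    fun x _ => T.hasFDerivWithinAt
  have hrestrict : (volume : Measure (Fin r → ℝ)).restrict
      (Set.univ.pi fun _ => Set.Ici (0 : ℝ))
        = Measure.pi fun _ => (volume : Measure ℝ).restrict (Set.Ici 0) := by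
    rw [volume_pi, Measure.restrict_pi_pi]
  rw [hCT]
  refine ⟨?_, fun hneg => ?_⟩
  · rw [integrableOn_image_iff_integrableOn_abs_det_fderiv_smul volume hmeas hderiv hinj.injOn]
    simp only [hF, hdet]
    rw [IntegrableOn, show (fun t : Fin r → ℝ => |A.det| • ∏ j, Complex.exp (a j * t j)) =
        |A.det| • (fun t : Fin r → ℝ => ∏ j, Complex.exp (a j * t j)) from rfl,
      integrable_smul_iff hdet0]
    constructor
    · intro h j
      by_contra! hj
      exact orthant_not_integrable a j (by rwa [hre]) h
    · intro hneg
      rw [hrestrict]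
      refine Integrable.fintype_prod (f := fun j (x : ℝ) => Complex.exp (a j * x)) fun j => ?_
      exact (integrableOn_Ici_iff_integrableOn_Ioi).2
        (integrableOn_exp_mul_complex_Ioi (by rw [hre]; exact hneg j) 0)
  · rw [integral_image_eq_integral_abs_det_fderiv_smul volume hmeas hderiv hinj.injOn]
    simp only [hF, hdet]
    rw [integral_smul, Complex.real_smul, hrestrict,
      integral_fintype_prod_eq_prod (f := fun j (x : ℝ) => Complex.exp (a j * x))]
    congr 1
    refine Finset.prod_congr rfl fun j _ => ?_
    rw [integral_Ici_eq_integral_Ioi, integral_exp_mul_complex_Ioi (by rw [hre]; exact hneg j)]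
    have : -φ (v j) + 2 * (Real.pi : ℂ) * Complex.I * (m (v j) : ℂ) = -a j := by
      simp only [ha]
      ring
    rw [this]
    simp [neg_div, inv_neg]
end

section
/- Let r ≥ 1 and let C_1, …, C_N be finitely many cones in ℝ^r, where C_i is the cone generated by a basis v^{(i)}_1, …, v^{(i)}_r of ℝ^r. Assume the union of the C_i is all of ℝ^r, that C_i ∩ C_j is Lebesgue-null for i ≠ j, and that there is a function φ : ℝ^r → ℂ and ℝ-linear maps φ_i : ℝ^r → ℂ with φ(y) = φ_i(y) for all y ∈ C_i and Re(φ_i(v^{(i)}_j)) < 0 for all i, j. Then for every linear functional m : ℝ^r → ℝ the function y ↦ exp(φ(y))·exp(−2πi·m(y)) is Lebesgue-integrable on ℝ^r, and its integral equals Σ_{i=1}^{N} |det(v^{(i)}_1, …, v^{(i)}_r)| · Π_{j=1}^{r} (−φ_i(v^{(i)}_j) + 2πi·m(v^{(i)}_j))^{-1}. -/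
/-!
The cone generated by a basis `w` is the image of the closed positive orthant under the linear
map `t ↦ ∑ j, t j • w j`, whose Jacobian is the constant `|det w|`. In these coordinates the
exponential of a linear form `L` becomes `∏ j, exp (L (w j) * t j)`, so by Fubini its integral
over the cone is a product of one-dimensional integrals `∫ exp (a t) dt = (-a)⁻¹` over `[0, ∞)`,
each convergent because `Re (L (w j)) < 0` (`cone_exp_integral`).

On the `i`-th cone the integrand is the exponential of `L = φl i - 2πi m`, and
`Re L = Re (φl i)` since `m` is real. The cones cover the space with null overlaps, so the total
integral is the sum of the contributions of the cones.
-/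

open MeasureTheory

lemma half_line_exp {a : ℂ} (ha : a.re < 0) :
    IntegrableOn (fun t : ℝ => Complex.exp (a * t)) (Set.Ici 0) ∧
      ∫ t in Set.Ici (0 : ℝ), Complex.exp (a * t) = (-a)⁻¹ := by
  refine ⟨(integrableOn_Ici_iff_integrableOn_Ioi (by simp)).2
    (integrableOn_exp_mul_complex_Ioi ha 0), ?_⟩
  rw [integral_Ici_eq_integral_Ioi, integral_exp_mul_complex_Ioi ha]
  simp [neg_div, inv_neg]

lemma orthant_exp_integral {r : ℕ} (a : Fin r → ℂ) (ha : ∀ j, (a j).re < 0) :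
    IntegrableOn (fun t : Fin r → ℝ => ∏ j, Complex.exp (a j * t j))
        (Set.univ.pi fun _ => Set.Ici (0 : ℝ)) ∧
      ∫ t in Set.univ.pi fun _ : Fin r => Set.Ici (0 : ℝ), ∏ j, Complex.exp (a j * t j)
        = ∏ j, (-a j)⁻¹ := by
  rw [IntegrableOn, volume_pi, Measure.restrict_pi_pi]
  constructor
  · exact Integrable.fintype_prod (f := fun j (t : ℝ) => Complex.exp (a j * t))
      fun j => (half_line_exp (ha j)).1
  · rw [integral_fintype_prod_eq_prod (f := fun j (t : ℝ) => Complex.exp (a j * t))]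
    exact Finset.prod_congr rfl fun j _ => (half_line_exp (ha j)).2

/-- The contribution of one simplicial cone: the image of the orthant under the basis matrix, so
that the change of variables contributes the constant factor `|det w|`. -/
lemma cone_exp_integral {r : ℕ} (w : Fin r → (Fin r → ℝ)) (hw : LinearIndependent ℝ w)
    (K : Set (Fin r → ℝ))
    (hK : K = {y | ∃ t : Fin r → ℝ, (∀ j, 0 ≤ t j) ∧ y = ∑ j, t j • w j})
    (L : (Fin r → ℝ) →ₗ[ℝ] ℂ) (hL : ∀ j, (L (w j)).re < 0) :
    MeasurableSet K ∧ IntegrableOn (fun y => Complex.exp (L y)) K ∧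
      ∫ y in K, Complex.exp (L y)
        = (Complex.ofReal |Matrix.det (Matrix.of fun a b : Fin r => w b a)|) *
          ∏ j, (-L (w j))⁻¹ := by
  set A : Matrix (Fin r) (Fin r) ℝ := Matrix.of fun a b => w b a with hA
  set M : (Fin r → ℝ) →L[ℝ] (Fin r → ℝ) := LinearMap.toContinuousLinearMap (Matrix.toLin' A)
    with hM
  have hMt : ∀ t, M t = ∑ j, t j • w j := by
    intro t
    ext a
    simp [hM, hA, Matrix.mulVec, dotProduct, mul_comm]
  have hinj : Function.Injective M := by
    intro s t hst
    rw [hMt, hMt] at hst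
    exact hw.fintypeLinearCombination_injective (by
      simpa [Fintype.linearCombination_apply] using hst)
  have hdet : M.det = A.det := by
    simp [hM, ContinuousLinearMap.det]
  have hKM : K = M '' (Set.univ.pi fun _ => Set.Ici (0 : ℝ)) := by
    rw [hK]
    ext y
    simp only [Set.mem_ofPred_eq, Set.mem_image, Set.mem_univ_pi, Set.mem_Ici, hMt, eq_comm]
  have hS : MeasurableSet (Set.univ.pi fun _ : Fin r => Set.Ici (0 : ℝ)) :=
    MeasurableSet.univ_pi fun _ => measurableSet_Ici
  have hexp : ∀ t, Complex.exp (L (M t)) = ∏ j, Complex.exp (L (w j) * t j) := by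
    intro t
    rw [hMt, map_sum, Complex.exp_sum]
    refine Finset.prod_congr rfl fun j _ => ?_
    rw [map_smul, Complex.real_smul, mul_comm]
  have hfd : ∀ x ∈ (Set.univ.pi fun _ : Fin r => Set.Ici (0 : ℝ)),
      HasFDerivWithinAt M M (Set.univ.pi fun _ : Fin r => Set.Ici (0 : ℝ)) x :=
    fun x _ => M.hasFDerivWithinAt
  obtain ⟨h1, h2⟩ := orthant_exp_integral (fun j => L (w j)) hL
  rw [hKM]
  refine ⟨hS.image_of_continuousOn_injOn M.continuous.continuousOn hinj.injOn, ?_, ?_⟩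
  · rw [integrableOn_image_iff_integrableOn_abs_det_fderiv_smul volume hS hfd hinj.injOn]
    simp only [hexp]
    exact h1.smul _
  · rw [integral_image_eq_integral_abs_det_fderiv_smul volume hS hfd hinj.injOn]
    simp only [hexp]
    rw [integral_smul, h2, hdet, Complex.real_smul]

/-- Complete-fan Fourier transform: if finitely many simplicial cones `C i` (each
generated by a basis `v i` of `ℝ^r`) cover `ℝ^r` with pairwise Lebesgue-null
intersections, and `φ : ℝ^r → ℂ` agrees on `C i` with an `ℝ`-linear map `φl i`
satisfying `Re (φl i (v i j)) < 0`, then for every linear functional `m` the function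
`y ↦ exp(φ y)·exp(−2πi m y)` is Lebesgue-integrable on `ℝ^r` with integral
`∑ i, |det(v i)| · ∏ j, (−φl i (v i j) + 2πi m (v i j))⁻¹`. -/
theorem stmt7 (r N : ℕ) (hr : 1 ≤ r) (v : Fin N → Fin r → (Fin r → ℝ))
    (hv : ∀ i, LinearIndependent ℝ (v i))
    (hspan : ∀ i, Submodule.span ℝ (Set.range (v i)) = ⊤)
    (C : Fin N → Set (Fin r → ℝ))
    (hC : ∀ i, C i = {y | ∃ t : Fin r → ℝ, (∀ j, 0 ≤ t j) ∧ y = ∑ j, t j • v i j})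
    (hcover : (⋃ i, C i) = Set.univ)
    (hnull : ∀ i j, i ≠ j → volume (C i ∩ C j) = 0)
    (φ : (Fin r → ℝ) → ℂ) (φl : Fin N → ((Fin r → ℝ) →ₗ[ℝ] ℂ))
    (hφ : ∀ i, ∀ y ∈ C i, φ y = φl i y)
    (hneg : ∀ i j, ((φl i) (v i j)).re < 0)
    (m : (Fin r → ℝ) →ₗ[ℝ] ℝ) :
    Integrable
      (fun y : Fin r → ℝ =>
        Complex.exp (φ y) * Complex.exp (-(2 * (Real.pi : ℂ) * Complex.I) * (m y : ℂ)))
      volume ∧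
    ∫ y : Fin r → ℝ,
        Complex.exp (φ y) * Complex.exp (-(2 * (Real.pi : ℂ) * Complex.I) * (m y : ℂ))
      = ∑ i, (Complex.ofReal |Matrix.det (Matrix.of fun a b : Fin r => v i b a)|) *
          ∏ j, (-(φl i) (v i j) + 2 * (Real.pi : ℂ) * Complex.I * (m (v i j) : ℂ))⁻¹ := by
  -- The total exponent on the `i`-th cone, as a single linear form.
  let L : Fin N → ((Fin r → ℝ) →ₗ[ℝ] ℂ) := fun i =>
    φl i - (2 * (Real.pi : ℂ) * Complex.I) • (Complex.ofRealCLM.toLinearMap ∘ₗ m)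
  have hLy : ∀ i y, L i y = φl i y - 2 * (Real.pi : ℂ) * Complex.I * (m y : ℂ) := by
    intro i y
    simp [L]
  have hLre : ∀ i j, (L i (v i j)).re < 0 := by
    intro i j
    rw [hLy]
    simpa using hneg i j
  have key := fun i => cone_exp_integral (v i) (hv i) (C i) (hC i) (L i) (hLre i)
  set F : (Fin r → ℝ) → ℂ := fun y =>
    Complex.exp (φ y) * Complex.exp (-(2 * (Real.pi : ℂ) * Complex.I) * (m y : ℂ)) with hF
  have hFL : ∀ i, Set.EqOn (fun y => Complex.exp (L i y)) F (C i) := by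
    intro i y hy
    simp only [hF]
    rw [hφ i y hy, ← Complex.exp_add, hLy]
    congr 1
    ring
  have hint : ∀ i, IntegrableOn F (C i) := fun i =>
    (key i).2.1.congr_fun (hFL i) (key i).1
  have hintU : IntegrableOn F (⋃ i, C i) := integrableOn_finite_iUnion.2 hint
  refine ⟨by simpa [hcover] using hintU, ?_⟩
  have hsum := integral_iUnion_ae (μ := volume) (f := F)
    (fun i => (key i).1.nullMeasurableSet) (fun i j hij => hnull i j hij) hintU
  rw [hcover, setIntegral_univ, tsum_fintype] at hsum
  rw [hsum]
  refine Finset.sum_congr rfl fun i _ => ?_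
  rw [← setIntegral_congr_fun (key i).1 (hFL i), (key i).2.2]
  congr 1
  refine Finset.prod_congr rfl fun j _ => ?_
  rw [hLy]
  congr 1
  ring
end

section
/- Let s₀, s₁, s₂ ∈ ℂ have positive real parts. Define φ : ℝ² → ℂ by: φ(y₁,y₂) = −s₁y₁ − s₂y₂ if y₁ ≥ 0 and y₂ ≥ 0; φ(y₁,y₂) = s₀y₁ − s₂(y₂ − y₁) if y₁ ≤ 0 and y₁ ≤ y₂; φ(y₁,y₂) = s₀y₂ − s₁(y₁ − y₂) if y₂ ≤ 0 and y₂ ≤ y₁ (these formulas agree on the overlaps, so φ is well defined). Then for all real x, y, the function (y₁,y₂) ↦ exp(φ(y₁,y₂))·exp(−2πi(x·y₁ + y·y₂)) is Lebesgue-integrable on ℝ², and its integral equals (s₀ + s₁ + s₂) / ((s₁ + 2πi·x)(s₂ + 2πi·y)(s₀ − 2πi·(x+y))). -/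
/-!
Put `A = s₁ + 2πix`, `B = s₂ + 2πiy`, `C = s₀ - 2πi(x + y)`. On each of the three maximal cones
of the fan the integrand is the exponential of a linear form, and a unimodular change of
coordinates turns the cone into a product of two half-lines:

* on `y₁, y₂ > 0` it is `exp(-A y₁) exp(-B y₂)`, with integral `1 / (A B)`;
* on `y₁ ≤ 0, y₁ < y₂` it is `exp(C y₁) exp(-B (y₂ - y₁))`, with integral `1 / (C B)`;
* on `y₂ ≤ 0, y₂ < y₁` it is `exp(C y₂) exp(-A (y₁ - y₂))`, with integral `1 / (C A)`.

`cone_integral` carries out the change of coordinates and Fubini's theorem. The diagonal ray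
`y₁ = y₂ ≤ 0` is attached to the third cone, so that the three cones partition the plane, and the
sum of the integrals is `(A + B + C) / (A B C)`, where `A + B + C = s₀ + s₁ + s₂`.
-/

open MeasureTheory

/-- If, in coordinates given by a measure-preserving `e`, the function `f` splits as a product
`g ⊗ h` on the cone `e ⁻¹' (S ×ˢ T)`, then its integral over that cone is a product of
one-dimensional integrals. -/
theorem cone_integral (e : ℝ × ℝ ≃ᵐ ℝ × ℝ) (he : MeasurePreserving e volume volume)
    {S T : Set ℝ} (hS : MeasurableSet S) (hT : MeasurableSet T) {g h : ℝ → ℂ}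
    (hg : IntegrableOn g S) (hh : IntegrableOn h T) {f : ℝ × ℝ → ℂ}
    (hf : ∀ p, (e p).1 ∈ S → (e p).2 ∈ T → f p = g (e p).1 * h (e p).2) :
    IntegrableOn f (e ⁻¹' (S ×ˢ T)) ∧
      ∫ p in e ⁻¹' (S ×ˢ T), f p = (∫ t in S, g t) * ∫ t in T, h t := by
  have hm : MeasurableSet (e ⁻¹' (S ×ˢ T)) := e.measurable (hS.prod hT)
  have heq : Set.EqOn f ((fun q : ℝ × ℝ => g q.1 * h q.2) ∘ e) (e ⁻¹' (S ×ˢ T)) :=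
    fun p hp => hf p hp.1 hp.2
  constructor
  · rw [integrableOn_congr_fun heq hm, he.integrableOn_comp_preimage e.measurableEmbedding]
    rw [IntegrableOn, Measure.volume_eq_prod, ← Measure.prod_restrict]
    exact Integrable.mul_prod hg hh
  · rw [setIntegral_congr_fun hm heq]
    simp only [Function.comp_def]
    rw [he.setIntegral_preimage_emb e.measurableEmbedding (fun q : ℝ × ℝ => g q.1 * h q.2),
      Measure.volume_eq_prod, setIntegral_prod_mul]

/-- The archimedean Fourier transform of the toric height on the projective plane:
for `s₀, s₁, s₂` with positive real parts and the piecewise-linear support function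
`φ` of the standard fan of `ℙ²`, the function
`(y₁,y₂) ↦ exp(φ(y₁,y₂))·exp(−2πi(x y₁ + y y₂))` is Lebesgue-integrable on `ℝ²` with
integral `(s₀+s₁+s₂)/((s₁+2πix)(s₂+2πiy)(s₀−2πi(x+y)))`. -/
theorem stmt9 (s₀ s₁ s₂ : ℂ) (h₀ : 0 < s₀.re) (h₁ : 0 < s₁.re) (h₂ : 0 < s₂.re)
    (φ : ℝ × ℝ → ℂ)
    (hφ1 : ∀ y₁ y₂ : ℝ, 0 ≤ y₁ → 0 ≤ y₂ →
      φ (y₁, y₂) = -s₁ * (y₁ : ℂ) - s₂ * (y₂ : ℂ))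
    (hφ2 : ∀ y₁ y₂ : ℝ, y₁ ≤ 0 → y₁ ≤ y₂ →
      φ (y₁, y₂) = s₀ * (y₁ : ℂ) - s₂ * ((y₂ : ℂ) - (y₁ : ℂ)))
    (hφ3 : ∀ y₁ y₂ : ℝ, y₂ ≤ 0 → y₂ ≤ y₁ →
      φ (y₁, y₂) = s₀ * (y₂ : ℂ) - s₁ * ((y₁ : ℂ) - (y₂ : ℂ)))
    (x y : ℝ) :
    Integrable
      (fun p : ℝ × ℝ =>
        Complex.exp (φ p) *
          Complex.exp (-(2 * (Real.pi : ℂ) * Complex.I) * ((x * p.1 + y * p.2 : ℝ) : ℂ)))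
      volume ∧
    ∫ p : ℝ × ℝ,
        Complex.exp (φ p) *
          Complex.exp (-(2 * (Real.pi : ℂ) * Complex.I) * ((x * p.1 + y * p.2 : ℝ) : ℂ))
      = (s₀ + s₁ + s₂) /
          ((s₁ + 2 * (Real.pi : ℂ) * Complex.I * (x : ℂ)) *
            (s₂ + 2 * (Real.pi : ℂ) * Complex.I * (y : ℂ)) *
            (s₀ - 2 * (Real.pi : ℂ) * Complex.I * ((x : ℂ) + (y : ℂ)))) := by
  set f : ℝ × ℝ → ℂ := fun p => Complex.exp (φ p) *
    Complex.exp (-(2 * (Real.pi : ℂ) * Complex.I) * ((x * p.1 + y * p.2 : ℝ) : ℂ)) with hf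
  obtain ⟨A, hA⟩ : ∃ A, A = s₁ + 2 * (Real.pi : ℂ) * Complex.I * (x : ℂ) := ⟨_, rfl⟩
  obtain ⟨B, hB⟩ : ∃ B, B = s₂ + 2 * (Real.pi : ℂ) * Complex.I * (y : ℂ) := ⟨_, rfl⟩
  obtain ⟨C, hC⟩ : ∃ C, C = s₀ - 2 * (Real.pi : ℂ) * Complex.I * ((x : ℂ) + (y : ℂ)) := ⟨_, rfl⟩
  have hAre : (-A).re < 0 := by simpa [hA] using h₁
  have hBre : (-B).re < 0 := by simpa [hB] using h₂
  have hCre : 0 < C.re := by simpa [hC] using h₀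
  have hA0 : A ≠ 0 := by rintro rfl; simp at hAre
  have hB0 : B ≠ 0 := by rintro rfl; simp at hBre
  have hC0 : C ≠ 0 := by rintro rfl; simp at hCre
  rw [← hA, ← hB, ← hC]
  -- `e p = (p.1, p.2 - p.1)` and `e' p = (p.2, p.1 - p.2)` straighten the two skew cones.
  let e : ℝ × ℝ ≃ᵐ ℝ × ℝ := (MeasurableEquiv.shearAddRight ℝ).symm
  have he : MeasurePreserving e volume volume :=
    MeasurePreserving.symm (MeasurableEquiv.shearAddRight ℝ)
      (measurePreserving_prod_add (volume : Measure ℝ) (volume : Measure ℝ))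
  let e' : ℝ × ℝ ≃ᵐ ℝ × ℝ := MeasurableEquiv.prodComm.trans e
  have he' : MeasurePreserving e' volume volume :=
    he.comp (Measure.measurePreserving_swap (μ := (volume : Measure ℝ)) (ν := volume))
  have e_apply : ∀ p, e p = (p.1, -p.1 + p.2) := fun p => rfl
  have e'_apply : ∀ p, e' p = (p.2, -p.2 + p.1) := fun p => rfl
  obtain ⟨i1, v1⟩ := cone_integral (MeasurableEquiv.refl _) (MeasurePreserving.id _)
    (S := Set.Ioi 0) (T := Set.Ioi 0) measurableSet_Ioi measurableSet_Ioi
    (integrableOn_exp_mul_complex_Ioi hAre 0) (integrableOn_exp_mul_complex_Ioi hBre 0)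
    (f := f) (by
      rintro ⟨a, b⟩ ha hb
      simp only [MeasurableEquiv.refl_apply, Set.mem_Ioi] at ha hb ⊢
      simp only [hf, hφ1 a b ha.le hb.le, ← Complex.exp_add]
      congr 1
      rw [hA, hB]; push_cast; ring)
  obtain ⟨i2, v2⟩ := cone_integral e he
    (S := Set.Iic 0) (T := Set.Ioi 0) measurableSet_Iic measurableSet_Ioi
    (integrableOn_exp_mul_complex_Iic hCre 0) (integrableOn_exp_mul_complex_Ioi hBre 0)
    (f := f) (by
      rintro ⟨a, b⟩ ha hb
      simp only [e_apply, Set.mem_Ioi, Set.mem_Iic] at ha hb ⊢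
      simp only [hf, hφ2 a b ha (by linarith), ← Complex.exp_add]
      congr 1
      rw [hC, hB]; push_cast; ring)
  obtain ⟨i3, v3⟩ := cone_integral e' he'
    (S := Set.Iic 0) (T := Set.Ici 0) measurableSet_Iic measurableSet_Ici
    (integrableOn_exp_mul_complex_Iic hCre 0)
    ((integrableOn_Ici_iff_integrableOn_Ioi (by finiteness)).2 (integrableOn_exp_mul_complex_Ioi hAre 0))
    (f := f) (by
      rintro ⟨a, b⟩ ha hb
      simp only [e'_apply, Set.mem_Ici, Set.mem_Iic] at ha hb ⊢
      simp only [hf, hφ3 a b ha (by linarith), ← Complex.exp_add]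
      congr 1
      rw [hC, hA]; push_cast; ring)
  rw [integral_Ici_eq_integral_Ioi] at v3
  rw [integral_exp_mul_complex_Ioi hAre, integral_exp_mul_complex_Ioi hBre] at v1
  rw [integral_exp_mul_complex_Iic hCre, integral_exp_mul_complex_Ioi hBre] at v2
  rw [integral_exp_mul_complex_Iic hCre, integral_exp_mul_complex_Ioi hAre] at v3
  set R1 := (MeasurableEquiv.refl (ℝ × ℝ)) ⁻¹' (Set.Ioi 0 ×ˢ Set.Ioi 0) with hR1
  set R2 := e ⁻¹' (Set.Iic 0 ×ˢ Set.Ioi 0) with hR2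
  set R3 := e' ⁻¹' (Set.Iic 0 ×ˢ Set.Ici 0) with hR3
  have m2 : MeasurableSet R2 := e.measurable (measurableSet_Iic.prod measurableSet_Ioi)
  have m3 : MeasurableSet R3 := e'.measurable (measurableSet_Iic.prod measurableSet_Ici)
  have d12 : Disjoint R1 R2 := by
    rw [Set.disjoint_left]
    rintro ⟨a, b⟩ h h'
    have u : 0 < a := h.1
    have v : a ≤ 0 := h'.1
    linarith
  have d123 : Disjoint (R1 ∪ R2) R3 := by
    rw [Set.disjoint_left]
    rintro ⟨a, b⟩ h h'
    have v : b ≤ 0 := h'.1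
    have w : 0 ≤ -b + a := h'.2
    rcases h with h | h
    · have u : 0 < b := h.2
      linarith
    · have u : 0 < -a + b := h.2
      linarith
  have hcover : R1 ∪ R2 ∪ R3 = Set.univ := by
    rw [Set.eq_univ_iff_forall]
    rintro ⟨a, b⟩
    rcases lt_or_ge 0 a with ha | ha
    · rcases lt_or_ge 0 b with hb | hb
      · exact Or.inl (Or.inl ⟨ha, hb⟩)
      · exact Or.inr ⟨hb, show 0 ≤ -b + a by linarith⟩
    · rcases lt_or_ge a b with hb | hb
      · exact Or.inl (Or.inr ⟨ha, show 0 < -a + b by linarith⟩)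
      · exact Or.inr ⟨hb.trans ha, show 0 ≤ -b + a by linarith⟩
  constructor
  · rw [← integrableOn_univ, ← hcover]
    exact (i1.union i2).union i3
  · rw [← setIntegral_univ, ← hcover, setIntegral_union d123 m3 (i1.union i2) i3,
      setIntegral_union d12 m2 i1 i2, v1, v2, v3]
    have hsum : s₀ + s₁ + s₂ = A + B + C := by rw [hA, hB, hC]; ring
    rw [hsum]
    simp only [Complex.ofReal_zero, mul_zero, Complex.exp_zero]
    field_simp
    ring
end

section
/- For an r×r real matrix J = (a_{ij}), define p_k (1 ≤ k ≤ r) to be the k-th leading principal minor, define q_{kℓ} (1 ≤ k < ℓ ≤ r) to be the determinant of the k×k matrix whose first k−1 columns are the first k−1 columns of the first k rows of J and whose last column is (a_{1ℓ},…,a_{kℓ}), and define r_{jk} (1 ≤ j < k ≤ r) to be the determinant of the (k−1)×(k−1) matrix obtained from the first k−1 columns of rows 1,…,j−1,j+1,…,k of J. Call J stable if p_1,…,p_r > 0 and (−1)^{ℓ−j}·r_{jℓ} ≥ 0 for all 1 ≤ j < ℓ ≤ r; call J compatible if it is either not stable or q_{jℓ} ≤ 0 for all 1 ≤ j < ℓ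 ≤ r. Then: (i) the r×r identity matrix is stable and compatible; and (ii) for every a ∈ {1,…,r} and p ∈ {1,…,r}, the r×r matrix whose rows consist of the standard basis row vectors e_iᵀ for i ∈ {1,…,r}∖{a}, listed in increasing order of i, together with the all-(−1) row vector inserted as the p-th row, has some leading principal minor p_k ≤ 0; hence it is not stable, and in particular it is compatible. -/
/-!
For the identity matrix the leading principal minors are `1`, while each minor `r_{jk}` and
`q_{kℓ}` has a zero last row, so stability and compatibility are immediate
(`pMinor_one`, `rMinor_one`, `qMinor_one`).

For the matrix with the all-`(-1)` row inserted, put `m = min a p` (`0`-based). The rows above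
row `m` agree with those of the identity, so the leading block of size `m + 1` is lower triangular
and its determinant is its last diagonal entry. That entry is `-1` when `p ≤ a` (row `m` is
the inserted row) and `0` when `a < p` (row `m` is `e_{a+1}ᵀ`, because `e_aᵀ` is omitted).
This is `pMinor_insertedMatrix_nonpos`.
-/

namespace Stmt14

variable {r : ℕ}

/-- The `k`-th leading principal minor `p_k` of an `r × r` real matrix (`1 ≤ k ≤ r`). -/
def pMinor (J : Matrix (Fin r) (Fin r) ℝ) (k : ℕ) (hk : k ≤ r) : ℝ :=
  Matrix.det (Matrix.of fun i j : Fin k => J (Fin.castLE hk i) (Fin.castLE hk j))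

/-- The minor `q_{kℓ}` (`1 ≤ k < ℓ ≤ r`): the determinant of the `k × k` matrix whose
first `k−1` columns are the first `k−1` columns of the first `k` rows of `J` and whose
last column is `(a_{1ℓ}, …, a_{kℓ})`. -/
def qMinor (J : Matrix (Fin r) (Fin r) ℝ) (k ℓ : ℕ) (hk : k ≤ r) (hℓ1 : 1 ≤ ℓ)
    (hℓ : ℓ ≤ r) : ℝ :=
  Matrix.det (Matrix.of fun i j : Fin k =>
    if (j : ℕ) < k - 1 then J (Fin.castLE hk i) (Fin.castLE hk j)
    else J (Fin.castLE hk i) ⟨ℓ - 1, by omega⟩)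

/-- The minor `r_{jk}` (`1 ≤ j < k ≤ r`): the determinant of the `(k−1) × (k−1)` matrix
obtained from the first `k−1` columns of rows `1, …, j−1, j+1, …, k` of `J`. -/
def rMinor (J : Matrix (Fin r) (Fin r) ℝ) (j k : ℕ) (hj : 1 ≤ j) (hjk : j < k)
    (hk : k ≤ r) : ℝ :=
  Matrix.det (Matrix.of fun a b : Fin (k - 1) =>
    J ⟨if (a : ℕ) < j - 1 then (a : ℕ) else (a : ℕ) + 1,
        by have := a.isLt; split <;> omega⟩
      ⟨(b : ℕ), by have := b.isLt; omega⟩)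

/-- `J` is stable if all leading principal minors are positive and
`(−1)^{ℓ−j}·r_{jℓ} ≥ 0` for all `1 ≤ j < ℓ ≤ r`. -/
def IsStable (J : Matrix (Fin r) (Fin r) ℝ) : Prop :=
  (∀ (k : ℕ) (hk1 : 1 ≤ k) (hk : k ≤ r), 0 < pMinor J k hk) ∧
  (∀ (j ℓ : ℕ) (hj : 1 ≤ j) (hjℓ : j < ℓ) (hℓ : ℓ ≤ r),
    0 ≤ (-1 : ℝ) ^ (ℓ - j) * rMinor J j ℓ hj hjℓ hℓ)

/-- `J` is compatible if it is either not stable or `q_{jℓ} ≤ 0` for all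
`1 ≤ j < ℓ ≤ r`. -/
def IsCompatible (J : Matrix (Fin r) (Fin r) ℝ) : Prop :=
  ¬ IsStable J ∨
    ∀ (j ℓ : ℕ) (hj : 1 ≤ j) (hjℓ : j < ℓ) (hℓ : ℓ ≤ r),
      qMinor J j ℓ (by omega) (by omega) hℓ ≤ 0

/-- The `r × r` matrix whose rows are the standard basis row vectors `eᵢᵀ` for
`i ≠ a`, listed in increasing order of `i`, with the all-`(−1)` row inserted as the
`p`-th row (`0`-based indices). -/
def insertedMatrix (r : ℕ) (a p : Fin r) : Matrix (Fin r) (Fin r) ℝ :=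
  Matrix.of fun i j =>
    if i = p then -1
    else
      let q : ℕ := if (i : ℕ) < (p : ℕ) then (i : ℕ) else (i : ℕ) - 1
      let idx : ℕ := if q < (a : ℕ) then q else q + 1
      if (j : ℕ) = idx then 1 else 0

theorem pMinor_one (k : ℕ) (hk : k ≤ r) :
    pMinor (1 : Matrix (Fin r) (Fin r) ℝ) k hk = 1 := by
  have h : (Matrix.of fun i j : Fin k =>
      (1 : Matrix (Fin r) (Fin r) ℝ) (Fin.castLE hk i) (Fin.castLE hk j)) = 1 := by
    ext i j
    simp [Matrix.one_apply]
  rw [pMinor, h, Matrix.det_one]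

/-- The last row is the restriction of `e_kᵀ` to the columns `1, …, k - 1`, hence zero. -/
theorem rMinor_one (j k : ℕ) (hj : 1 ≤ j) (hjk : j < k) (hk : k ≤ r) :
    rMinor (1 : Matrix (Fin r) (Fin r) ℝ) j k hj hjk hk = 0 := by
  refine Matrix.det_eq_zero_of_row_eq_zero ⟨k - 2, by omega⟩ fun b => ?_
  have hb := b.isLt
  rw [Matrix.of_apply, Matrix.one_apply_ne]
  rw [Ne, Fin.mk.injEq]
  dsimp only
  split <;> omega

/-- The last row is the restriction of `e_kᵀ` to the columns `1, …, k - 1, ℓ`, hence zero. -/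
theorem qMinor_one (k ℓ : ℕ) (hk1 : 1 ≤ k) (hkℓ : k < ℓ) (hk : k ≤ r) (hℓ1 : 1 ≤ ℓ)
    (hℓ : ℓ ≤ r) : qMinor (1 : Matrix (Fin r) (Fin r) ℝ) k ℓ hk hℓ1 hℓ = 0 := by
  refine Matrix.det_eq_zero_of_row_eq_zero ⟨k - 1, by omega⟩ fun b => ?_
  rw [Matrix.of_apply]
  split
  · rw [Matrix.one_apply_ne]
    simp only [Ne, Fin.ext_iff, Fin.val_castLE]
    omega
  · rw [Matrix.one_apply_ne]
    simp only [Ne, Fin.ext_iff, Fin.val_castLE]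
    omega

/-- With `0`-based `m = min a p`, the leading `(m + 1) × (m + 1)` block is lower triangular,
with diagonal `1, …, 1, -1` if `p ≤ a` and `1, …, 1, 0` if `a < p`. -/
theorem pMinor_insertedMatrix_nonpos (a p : Fin r) (hk : min (a : ℕ) p + 1 ≤ r) :
    pMinor (insertedMatrix r a p) (min (a : ℕ) p + 1) hk ≤ 0 := by
  -- the rows above row `m` are those of the identity
  have hrow : ∀ i j : Fin r, (i : ℕ) < min (a : ℕ) p →
      insertedMatrix r a p i j = if (j : ℕ) = i then 1 else 0 := by
    intro i j hi
    have h1 : (i : ℕ) < a := by omega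
    have h2 : (i : ℕ) < p := by omega
    have h3 : i ≠ p := by rintro rfl; omega
    simp only [insertedMatrix, Matrix.of_apply, if_neg h3, if_pos h2, if_pos h1]
  rw [pMinor, Matrix.det_of_isLowerTriangular, Fin.prod_univ_castSucc]
  · rw [Finset.prod_eq_one, one_mul]
    · rcases le_or_gt (p : ℕ) a with h | h
      · have h3 : Fin.castLE hk (Fin.last (min (a : ℕ) p)) = p := by
          ext; simp [h]
        simp [insertedMatrix, h3]
      · have h3 : Fin.castLE hk (Fin.last (min (a : ℕ) p)) = a := by
          ext; simp [h.le]
        have h4 : a ≠ p := by rintro rfl; omega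
        rw [Matrix.of_apply, h3]
        simp only [insertedMatrix, Matrix.of_apply, if_neg h4, if_pos h, lt_irrefl, if_false]
        rw [if_neg (by omega)]
    · intro i _
      rw [Matrix.of_apply, hrow _ _ i.isLt]
      simp
  · intro i j hij
    have hij' : (i : ℕ) < j := hij
    have hj := j.isLt
    rw [Matrix.of_apply, hrow _ _ (by simp only [Fin.val_castLE]; omega), if_neg]
    simp only [Fin.val_castLE]
    omega

/-- (i) The identity matrix is stable and compatible.  (ii) Every matrix obtained from
the standard basis rows `eᵢᵀ` (`i ≠ a`) in increasing order together with the
all-`(−1)` row inserted at position `p` has some leading principal minor `≤ 0`, hence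
is not stable, and in particular is compatible. -/
theorem stmt14 (r : ℕ) :
    (IsStable (1 : Matrix (Fin r) (Fin r) ℝ) ∧
      IsCompatible (1 : Matrix (Fin r) (Fin r) ℝ)) ∧
    ∀ a p : Fin r,
      (∃ (k : ℕ) (hk1 : 1 ≤ k) (hk : k ≤ r),
        pMinor (insertedMatrix r a p) k hk ≤ 0) ∧
      ¬ IsStable (insertedMatrix r a p) ∧ IsCompatible (insertedMatrix r a p) := by
  refine ⟨⟨⟨fun k _ hk => ?_, fun j ℓ hj hjℓ hℓ => ?_⟩, Or.inr fun j ℓ hj hjℓ hℓ => ?_⟩,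
    fun a p => ?_⟩
  · rw [pMinor_one]
    exact one_pos
  · rw [rMinor_one, mul_zero]
  · exact (qMinor_one j ℓ hj hjℓ _ _ hℓ).le
  · have hk : min (a : ℕ) p + 1 ≤ r := by omega
    have hp := pMinor_insertedMatrix_nonpos a p hk
    have hs : ¬ IsStable (insertedMatrix r a p) := fun h =>
      (h.1 _ (Nat.le_add_left 1 _) hk).not_ge hp
    exact ⟨⟨_, Nat.le_add_left 1 _, hk, hp⟩, hs, Or.inl hs⟩

end Stmt14
end
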